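/- arXiv:1406.1977 — 2 statements merged into one kernel-verified Lean document; each statement's English description precedes it below -/
import Mathlib

section
/- Let m ≥ 2 be an integer, K = ℝ or ℂ, and let p be a real number with p ≥ 2m. Suppose C > 0 is such that for every n ≥ 1 and every m-linear form T on ℓ_p^n one has (∑_{i_1,…,i_m=1}^{n} |T(e_{i_1},…,e_{i_m})|^{2mp/(mp+p−2m)})^{(mp+p−2m)/(2mp)} ≤ C·‖T‖, and suppose M > 0 is such that for every n ≥ 1 and every m-homogeneous polynomial P on ℓ_p^n with polar L one has ‖L‖ ≤ M·‖P‖. Then for every n ≥ 1 and every m-homogeneous polynomial P(x) = ∑_{|α|=m} a_α x^α on ℓ_p^n one has (∑_{|α|=m} |a_α|^{2mp/(mp+p−2m)})^{(mp+p−2m)/(2mp)} ≤ (m!)^{(mp−p+2m)/(2mp)} · C · M · ‖P‖. -/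
open Finset Nat

/-- The `ℓ_p` norm on `𝕜^n` for a real exponent `p`. -/
noncomputable def lpNorm {𝕜 : Type*} [RCLike 𝕜] {n : ℕ} (p : ℝ) (x : Fin n → 𝕜) : ℝ :=
  (∑ i, ‖x i‖ ^ p) ^ (1 / p)

/-- The sup norm of the `m`-homogeneous polynomial with coefficients `a`
over the unit ball of `ℓ_p^n`. -/
noncomputable def polyNorm {𝕜 : Type*} [RCLike 𝕜] (p : ℝ) (m n : ℕ) (a : (Fin n → ℕ) → 𝕜) : ℝ :=
  sSup {y : ℝ | ∃ x : Fin n → 𝕜, lpNorm p x ≤ 1 ∧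
    y = ‖∑ α ∈ Finset.Nat.antidiagonalTuple n m, a α * ∏ i, x i ^ α i‖}

/-- The sup norm of an `m`-linear form over the product of unit balls of `ℓ_p^n`. -/
noncomputable def multNorm {𝕜 : Type*} [RCLike 𝕜] (p : ℝ) (m n : ℕ)
    (T : MultilinearMap 𝕜 (fun _ : Fin m => (Fin n → 𝕜)) 𝕜) : ℝ :=
  sSup {y : ℝ | ∃ x : Fin m → (Fin n → 𝕜), (∀ j, lpNorm p (x j) ≤ 1) ∧ y = ‖T x‖}

/-!
The polar `L` of `P = ∑ a_α x^α` takes the value `a_α / (m choose α)` at `(e_{i_1}, …, e_{i_m})`,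
where `α` counts the occurrences of each coordinate among `i_1, …, i_m`, and each `α` is produced
by exactly `(m choose α) ≤ m!` such tuples. Hence `∑ |a_α| ^ q ≤ (m!) ^ (q - 1) ∑ |L(e_i)| ^ q`
for every `q ≥ 1`, and the bounds on `L` transfer to `P` after taking `q`-th roots.
-/

lemma coeff_prod_X_pow {ι R : Type*} [Fintype ι] [CommSemiring R] (α β : ι → ℕ) :
    MvPolynomial.coeff (Finsupp.equivFunOnFinite.symm α)
      (∏ i, (MvPolynomial.X i : MvPolynomial ι R) ^ β i) = if β = α then 1 else 0 := by
  classical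
  have hmonomial : ∏ i, (MvPolynomial.X i : MvPolynomial ι R) ^ β i =
      MvPolynomial.monomial (Finsupp.equivFunOnFinite.symm β) 1 := by
    simp [MvPolynomial.monomial_eq, Finsupp.prod_fintype]
  simp [hmonomial, MvPolynomial.coeff_monomial]

section MultiIndex

variable {κ ι : Type*} [Fintype κ] [DecidableEq ι]

/-- The exponent `α` of the monomial `x^α = ∏ j, x (f j)`: the entry `α i` is the number of
occurrences of the coordinate `i` in the tuple `f`. -/
def multiIndex (f : κ → ι) : ι → ℕ := fun i => #{j | f j = i}

lemma multiIndex_comp_perm (f : κ → ι) (σ : Equiv.Perm κ) :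
    multiIndex (fun j => f (σ j)) = multiIndex f :=
  funext fun _ => Finset.card_equiv σ (by simp)

variable [Fintype ι]

lemma multiIndex_mem_piAntidiag (f : κ → ι) :
    multiIndex f ∈ piAntidiag univ (Fintype.card κ) :=
  mem_piAntidiag.mpr
    ⟨(card_eq_sum_card_fiberwise (f := f) (s := univ) (t := univ) (by simp)).symm, by simp⟩

lemma prod_comp_eq_prod_pow_multiIndex {R : Type*} [CommMonoid R] (f : κ → ι) (x : ι → R) :
    ∏ j, x (f j) = ∏ i, x i ^ multiIndex f i := by
  simp only [← Fintype.prod_fiberwise' f x, prod_const, multiIndex, Finset.card_univ,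
    Fintype.card_subtype]

lemma sum_pow_card_eq_sum_prod_pow_multiIndex {R : Type*} [CommSemiring R] [DecidableEq κ]
    (x : ι → R) :
    (∑ i, x i) ^ Fintype.card κ = ∑ f : κ → ι, ∏ i, x i ^ multiIndex f i := by
  simp only [← prod_comp_eq_prod_pow_multiIndex, ← Fintype.prod_sum, prod_const, Finset.card_univ]

-- Both sides are the coefficient of `x^α` in the expansion of `(∑ i, x i) ^ card κ`.
lemma card_multiIndex_eq_multinomial [DecidableEq κ] {α : ι → ℕ}
    (hα : α ∈ piAntidiag univ (Fintype.card κ)) :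
    #{f : κ → ι | multiIndex f = α} = Nat.multinomial univ α := by
  have hexpand := (sum_pow_card_eq_sum_prod_pow_multiIndex (κ := κ) _).symm.trans
    (sum_pow_eq_sum_piAntidiag univ (fun i => (MvPolynomial.X i : MvPolynomial ι ℕ)) _)
  have hcoeff := congrArg (MvPolynomial.coeff (Finsupp.equivFunOnFinite.symm α)) hexpand
  simpa only [← nsmul_eq_mul, MvPolynomial.coeff_sum, MvPolynomial.coeff_smul, coeff_prod_X_pow,
    sum_boole, smul_eq_mul, mul_ite, mul_one, mul_zero, sum_ite_eq', hα, if_true,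
    Nat.cast_id] using hcoeff

lemma sum_comp_multiIndex {M : Type*} [AddCommMonoid M] [DecidableEq κ] (G : (ι → ℕ) → M) :
    ∑ f : κ → ι, G (multiIndex f) =
      ∑ α ∈ piAntidiag univ (Fintype.card κ), Nat.multinomial univ α • G α := by
  rw [← sum_fiberwise_of_maps_to' fun f _ => multiIndex_mem_piAntidiag f]
  refine sum_congr rfl fun α hα => ?_
  rw [sum_const, card_multiIndex_eq_multinomial hα]

end MultiIndex

lemma multinomial_le_factorial_sum {ι : Type*} (s : Finset ι) (α : ι → ℕ) :
    Nat.multinomial s α ≤ (∑ i ∈ s, α i)! :=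
  Nat.div_le_self _ _

section PolarForm

variable {κ ι 𝕜 : Type*} [Fintype κ] [DecidableEq κ] [Fintype ι] [DecidableEq ι]

/-- The polar of the homogeneous polynomial `∑ a_α x^α` of degree `card κ`: the symmetric
multilinear form in arguments indexed by `κ` that, in characteristic zero, restricts to the
polynomial on the diagonal. -/
noncomputable def polarForm [Field 𝕜] (a : (ι → ℕ) → 𝕜) :
    MultilinearMap 𝕜 (fun _ : κ => ι → 𝕜) 𝕜 :=
  ∑ f : κ → ι, (a (multiIndex f) / Nat.multinomial univ (multiIndex f)) •
    (MultilinearMap.mkPiAlgebra 𝕜 κ 𝕜).compLinearMap fun j => LinearMap.proj (f j)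

section Field

variable [Field 𝕜] (a : (ι → ℕ) → 𝕜)

lemma polarForm_apply (x : κ → ι → 𝕜) :
    polarForm a x = ∑ f : κ → ι,
      a (multiIndex f) / Nat.multinomial univ (multiIndex f) * ∏ j, x j (f j) := by
  simp [polarForm]

lemma polarForm_comp_perm (σ : Equiv.Perm κ) (x : κ → ι → 𝕜) :
    polarForm a (fun j => x (σ j)) = polarForm a x := by
  simp only [polarForm_apply]
  refine (Fintype.sum_equiv (σ.symm.arrowCongr (Equiv.refl ι)) _ _ fun f => ?_).symm
  have hreindex : σ.symm.arrowCongr (Equiv.refl ι) f = fun j => f (σ j) := rfl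
  rw [hreindex, multiIndex_comp_perm, Equiv.prod_comp σ fun j => x j (f j)]

lemma polarForm_single (f : κ → ι) :
    polarForm a (fun j => Pi.single (f j) 1) =
      a (multiIndex f) / Nat.multinomial univ (multiIndex f) := by
  rw [polarForm_apply, sum_eq_single f]
  · simp
  · intro g _ hgf
    obtain ⟨j, hj⟩ := Function.ne_iff.mp hgf
    rw [prod_eq_zero (mem_univ j) (Pi.single_eq_of_ne hj 1), mul_zero]
  · simp

lemma polarForm_diagonal [CharZero 𝕜] (x : ι → 𝕜) :
    polarForm a (fun _ : κ => x) =
      ∑ α ∈ piAntidiag univ (Fintype.card κ), a α * ∏ i, x i ^ α i := by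
  simp only [polarForm_apply, prod_comp_eq_prod_pow_multiIndex]
  rw [sum_comp_multiIndex fun α => a α / Nat.multinomial univ α * ∏ i, x i ^ α i]
  refine sum_congr rfl fun α _ => ?_
  have hmultinomial : (Nat.multinomial univ α : 𝕜) ≠ 0 :=
    Nat.cast_ne_zero.mpr (Nat.multinomial_pos _ _).ne'
  rw [nsmul_eq_mul]
  field_simp

end Field

section RCLike

variable [RCLike 𝕜] {q : ℝ}

lemma norm_rpow_eq_natCast_rpow_mul_norm_div_rpow {N : ℕ} (hN : N ≠ 0) (z : 𝕜) (q : ℝ) :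
    ‖z‖ ^ q = (N : ℝ) ^ (q - 1) * (N * ‖z / N‖ ^ q) := by
  have hN0 : (N : ℝ) ≠ 0 := Nat.cast_ne_zero.mpr hN
  rw [norm_div, RCLike.norm_natCast, Real.div_rpow (norm_nonneg z) N.cast_nonneg,
    Real.rpow_sub_one hN0]
  have hNq : (N : ℝ) ^ q ≠ 0 := (Real.rpow_pos_of_pos (by positivity : (0 : ℝ) < N) q).ne'
  field_simp

variable (κ) in
lemma sum_norm_rpow_le_factorial_rpow_mul_sum_norm_polarForm_rpow (hq : 1 ≤ q)
    (a : (ι → ℕ) → 𝕜) :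
    ∑ α ∈ piAntidiag univ (Fintype.card κ), ‖a α‖ ^ q ≤ ((Fintype.card κ)! : ℝ) ^ (q - 1) *
      ∑ f : κ → ι, ‖polarForm a (fun j => Pi.single (f j) 1)‖ ^ q := by
  simp only [polarForm_single]
  rw [sum_comp_multiIndex fun α => ‖a α / Nat.multinomial univ α‖ ^ q, mul_sum]
  refine sum_le_sum fun α hα => ?_
  have hle : Nat.multinomial univ α ≤ (Fintype.card κ)! :=
    (mem_piAntidiag.mp hα).1 ▸ multinomial_le_factorial_sum univ α
  rw [norm_rpow_eq_natCast_rpow_mul_norm_div_rpow (Nat.multinomial_pos univ α).ne', nsmul_eq_mul]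
  gcongr

variable (κ) in
lemma rpow_inv_sum_norm_rpow_le_factorial_rpow_mul (hq : 1 ≤ q) (a : (ι → ℕ) → 𝕜) :
    (∑ α ∈ piAntidiag univ (Fintype.card κ), ‖a α‖ ^ q) ^ q⁻¹ ≤
      ((Fintype.card κ)! : ℝ) ^ (1 - q⁻¹) *
        (∑ f : κ → ι, ‖polarForm a (fun j => Pi.single (f j) 1)‖ ^ q) ^ q⁻¹ := by
  have hq0 : 0 < q := by linarith
  calc (∑ α ∈ piAntidiag univ (Fintype.card κ), ‖a α‖ ^ q) ^ q⁻¹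
      ≤ (((Fintype.card κ)! : ℝ) ^ (q - 1) *
          ∑ f : κ → ι, ‖polarForm a (fun j => Pi.single (f j) 1)‖ ^ q) ^ q⁻¹ := by
        gcongr
        exact sum_norm_rpow_le_factorial_rpow_mul_sum_norm_polarForm_rpow κ hq a
    _ = ((Fintype.card κ)! : ℝ) ^ (1 - q⁻¹) *
          (∑ f : κ → ι, ‖polarForm a (fun j => Pi.single (f j) 1)‖ ^ q) ^ q⁻¹ := by
        rw [Real.mul_rpow (by positivity) (by positivity), ← Real.rpow_mul (by positivity),
          sub_mul, mul_inv_cancel₀ hq0.ne', one_mul]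

end RCLike

end PolarForm

section HardyLittlewoodExponent

variable {m p : ℝ}

lemma one_le_hardyLittlewood_exponent (hm : 1 ≤ m) (hp : 2 * m < m * p + p) :
    1 ≤ 2 * m * p / (m * p + p - 2 * m) := by
  rw [one_le_div (by linarith)]
  nlinarith

lemma one_sub_hardyLittlewood_inv_exponent (hm : m ≠ 0) (hp : p ≠ 0) :
    1 - (m * p + p - 2 * m) / (2 * m * p) = (m * p - p + 2 * m) / (2 * m * p) := by
  field_simp
  ring

end HardyLittlewoodExponent

theorem polynomial_HL_from_multilinear_and_polarization_general {𝕜 : Type*} [RCLike 𝕜]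
    {m n : ℕ} {p q C M : ℝ} (hq : 1 ≤ q) (hC : 0 ≤ C)
    (hmult : ∀ T : MultilinearMap 𝕜 (fun _ : Fin m => (Fin n → 𝕜)) 𝕜,
      (∑ f : Fin m → Fin n, ‖T (fun j => Pi.single (f j) 1)‖ ^ q) ^ q⁻¹ ≤ C * multNorm p m n T)
    (hpolarization : ∀ a : (Fin n → ℕ) → 𝕜,
      ∀ L : MultilinearMap 𝕜 (fun _ : Fin m => (Fin n → 𝕜)) 𝕜,
      (∀ (σ : Equiv.Perm (Fin m)) (x : Fin m → (Fin n → 𝕜)), L (fun j => x (σ j)) = L x) →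
      (∀ x : Fin n → 𝕜,
        L (fun _ => x) = ∑ α ∈ Finset.Nat.antidiagonalTuple n m, a α * ∏ i, x i ^ α i) →
      multNorm p m n L ≤ M * polyNorm p m n a)
    (a : (Fin n → ℕ) → 𝕜) :
    (∑ α ∈ Finset.Nat.antidiagonalTuple n m, ‖a α‖ ^ q) ^ q⁻¹ ≤
      (m ! : ℝ) ^ (1 - q⁻¹) * C * M * polyNorm p m n a := by
  have hpolar : multNorm p m n (polarForm a) ≤ M * polyNorm p m n a :=
    hpolarization a (polarForm a) (polarForm_comp_perm a) fun x => by
      simpa only [Fintype.card_fin, piAntidiag_univ_fin_eq_antidiagonalTuple] using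
        polarForm_diagonal (κ := Fin m) a x
  have hcoeff := rpow_inv_sum_norm_rpow_le_factorial_rpow_mul (Fin m) hq a
  rw [Fintype.card_fin, piAntidiag_univ_fin_eq_antidiagonalTuple] at hcoeff
  calc (∑ α ∈ Finset.Nat.antidiagonalTuple n m, ‖a α‖ ^ q) ^ q⁻¹
      ≤ (m ! : ℝ) ^ (1 - q⁻¹) *
          (∑ f : Fin m → Fin n, ‖polarForm a (fun j => Pi.single (f j) 1)‖ ^ q) ^ q⁻¹ := hcoeff
    _ ≤ (m ! : ℝ) ^ (1 - q⁻¹) * (C * multNorm p m n (polarForm a)) := by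
        gcongr
        exact hmult _
    _ ≤ (m ! : ℝ) ^ (1 - q⁻¹) * (C * (M * polyNorm p m n a)) := by gcongr
    _ = (m ! : ℝ) ^ (1 - q⁻¹) * C * M * polyNorm p m n a := by ring

/-- If `C` is a constant for the `m`-linear Hardy–Littlewood inequality on
`ℓ_p^n` (`p ≥ 2m`), and `M` is a polarization constant (`‖L‖ ≤ M‖P‖` for every
`m`-homogeneous polynomial `P` with polar `L`), then `(m!)^{(mp-p+2m)/(2mp)} · C · M` is a
constant for the polynomial Hardy–Littlewood inequality. -/
theorem polynomial_HL_from_multilinear_and_polarization {𝕜 : Type*} [RCLike 𝕜]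
    (m : ℕ) (hm : 2 ≤ m) (p : ℝ) (hp : 2 * (m : ℝ) ≤ p)
    (C : ℝ) (hC : 0 < C) (M : ℝ) (hM : 0 < M)
    (hmult : ∀ n : ℕ, 1 ≤ n → ∀ T : MultilinearMap 𝕜 (fun _ : Fin m => (Fin n → 𝕜)) 𝕜,
      (∑ f : Fin m → Fin n, ‖T (fun j => Pi.single (f j) 1)‖
          ^ (2 * (m : ℝ) * p / ((m : ℝ) * p + p - 2 * m)))
        ^ (((m : ℝ) * p + p - 2 * m) / (2 * (m : ℝ) * p)) ≤ C * multNorm p m n T)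
    (hpolarization : ∀ n : ℕ, 1 ≤ n → ∀ a : (Fin n → ℕ) → 𝕜,
      ∀ L : MultilinearMap 𝕜 (fun _ : Fin m => (Fin n → 𝕜)) 𝕜,
      (∀ (σ : Equiv.Perm (Fin m)) (x : Fin m → (Fin n → 𝕜)), L (fun j => x (σ j)) = L x) →
      (∀ x : Fin n → 𝕜,
        L (fun _ => x) = ∑ α ∈ Finset.Nat.antidiagonalTuple n m, a α * ∏ i, x i ^ α i) →
      multNorm p m n L ≤ M * polyNorm p m n a) :
    ∀ n : ℕ, 1 ≤ n → ∀ a : (Fin n → ℕ) → 𝕜,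
      (∑ α ∈ Finset.Nat.antidiagonalTuple n m, ‖a α‖
          ^ (2 * (m : ℝ) * p / ((m : ℝ) * p + p - 2 * m)))
        ^ (((m : ℝ) * p + p - 2 * m) / (2 * (m : ℝ) * p)) ≤
      (m ! : ℝ) ^ (((m : ℝ) * p - p + 2 * m) / (2 * (m : ℝ) * p)) * C * M *
        polyNorm p m n a := by
  have hm2 : (2 : ℝ) ≤ m := mod_cast hm
  have hq := one_le_hardyLittlewood_exponent (m := m) (p := p) (by linarith) (by nlinarith)
  have hq_conj := one_sub_hardyLittlewood_inv_exponent (m := m) (p := p) (by linarith) (by linarith)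
  simp only [← inv_div (2 * (m : ℝ) * p)] at hmult hq_conj ⊢
  exact fun n hn => hq_conj ▸ polynomial_HL_from_multilinear_and_polarization_general hq hC.le
    (hmult n hn) (hpolarization n hn)
end

section
/- Let m ≥ 2 be an integer and let p be a real number with 2m ≤ p < ∞. If D_ℂ > 0 is such that for every n ≥ 1 and every m-homogeneous polynomial Q(z) = ∑_{|α|=m} b_α z^α on the complex space ℓ_p^n one has (∑_{|α|=m} |b_α|^{2mp/(mp+p−2m)})^{(mp+p−2m)/(2mp)} ≤ D_ℂ·‖Q‖, then for every n ≥ 1 and every m-homogeneous polynomial P(x) = ∑_{|α|=m} a_α x^α on the real space ℓ_p^n one has (∑_{|α|=m} |a_α|^{2mp/(mp+p−2m)})^{(mp+p−2m)/(2mp)} ≤ 2^{m−1}·D_ℂ·‖P‖. -/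
open Finset

/-!
For a real form `P` of degree `m` and a complex point `z`, the polynomial `R(t) = P(t z + conj z)`
has `t^m`-coefficient `P(z)` and constant coefficient `P(conj z) = conj P(z)`. Visser's inequality
`|R₀| + |Rₘ| ≤ max_{|t| = 1} |R(t)|`, which follows by averaging `R` over rotated `m`-th roots of
unity, thus bounds `2 |P(z)|`. On the unit circle, `t = ω²` gives `t z + conj z = 2 ω Re(ω z)`, so
`|R(t)| = 2ᵐ |P(Re(ω z))|`, and `Re(ω z)` lies in the real unit ball whenever `z` lies in the
complex one. Hence complexifying `P` increases its norm by a factor of at most `2ᵐ⁻¹`.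
-/

section PolynomialCoefficients

open Polynomial

lemma natDegree_linear_pow_le {R : Type*} [CommSemiring R] (a b : R) (d : ℕ) :
    ((C a * X + C b) ^ d).natDegree ≤ d := by
  simpa only [mul_one] using natDegree_pow_le_of_le d (natDegree_linear_le (a := a) (b := b))

lemma coeff_linear_pow {R : Type*} [CommSemiring R] (a b : R) (d : ℕ) :
    ((C a * X + C b) ^ d).coeff d = a ^ d := by
  simpa using coeff_pow_of_natDegree_le (m := d) (natDegree_linear_le (a := a) (b := b))

lemma natDegree_prod_le_sum {R ι : Type*} [CommSemiring R] {s : Finset ι} {f : ι → R[X]}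
    {d : ι → ℕ} (hf : ∀ i ∈ s, (f i).natDegree ≤ d i) :
    (∏ i ∈ s, f i).natDegree ≤ ∑ i ∈ s, d i :=
  (natDegree_prod_le s f).trans (sum_le_sum hf)

lemma coeff_prod_sum_of_natDegree_le {R ι : Type*} [CommSemiring R] {s : Finset ι} {f : ι → R[X]}
    {d : ι → ℕ} (hf : ∀ i ∈ s, (f i).natDegree ≤ d i) :
    (∏ i ∈ s, f i).coeff (∑ i ∈ s, d i) = ∏ i ∈ s, (f i).coeff (d i) := by
  induction s using Finset.cons_induction with
  | empty => simp
  | cons i s hi ih =>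
    have hs : ∀ j ∈ s, (f j).natDegree ≤ d j := fun j hj => hf j (mem_cons_of_mem hj)
    rw [prod_cons, sum_cons, prod_cons, coeff_mul_add_eq_of_natDegree_le (hf i (mem_cons_self i s))
      (natDegree_prod_le_sum hs), ih hs]

end PolynomialCoefficients

section Visser

open Polynomial

lemma geom_sum_pow_eq_zero_of_isPrimitiveRoot {R : Type*} [CommRing R] [IsDomain R] {ζ : R}
    {m j : ℕ} (hζ : IsPrimitiveRoot ζ m) (hj : j ≠ 0) (hjm : j < m) :
    ∑ k ∈ range m, (ζ ^ j) ^ k = 0 := by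
  refine eq_zero_of_ne_zero_of_mul_left_eq_zero
    (sub_ne_zero.2 (hζ.pow_ne_one_of_pos_of_lt hj hjm)) ?_
  rw [mul_geom_sum, ← pow_mul, mul_comm, pow_mul, hζ.pow_eq_one, one_pow, sub_self]

lemma sum_eval_primitiveRoot_pow_mul {R : Type*} [CommRing R] [IsDomain R] {ζ : R} {m : ℕ}
    (hζ : IsPrimitiveRoot ζ m) (hm : m ≠ 0) {f : R[X]} (hf : f.natDegree ≤ m) (w : R) :
    ∑ k ∈ range m, f.eval (ζ ^ k * w) = m * (f.coeff 0 + f.coeff m * w ^ m) := by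
  have eval_expansion (k : ℕ) :
      f.eval (ζ ^ k * w) = ∑ j ∈ range (m + 1), f.coeff j * w ^ j * (ζ ^ j) ^ k := by
    rw [eval_eq_sum_range' (Nat.lt_succ_of_le hf)]
    refine sum_congr rfl fun j _ => ?_
    ring
  simp_rw [eval_expansion]
  rw [sum_comm]
  simp_rw [← mul_sum]
  rw [sum_eq_add_of_mem 0 m (by simp) (by simp) hm.symm]
  · simp only [pow_zero, one_pow, hζ.pow_eq_one, sum_const, card_range, nsmul_eq_mul]
    ring
  · rintro j hj ⟨hj_ne_zero, hj_ne_m⟩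
    have hj_lt : j < m := (mem_range_succ_iff.1 hj).lt_of_ne hj_ne_m
    rw [geom_sum_pow_eq_zero_of_isPrimitiveRoot hζ hj_ne_zero hj_lt, mul_zero]

lemma exists_norm_eq_one_norm_add_mul_eq (a b : ℂ) :
    ∃ c : ℂ, ‖c‖ = 1 ∧ ‖a + b * c‖ = ‖a‖ + ‖b‖ := by
  refine ⟨Complex.exp ((a.arg - b.arg : ℝ) * Complex.I), Complex.norm_exp_ofReal_mul_I _, ?_⟩
  have b_rotated : b * Complex.exp ((a.arg - b.arg : ℝ) * Complex.I) =
      ‖b‖ * Complex.exp (a.arg * Complex.I) := by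
    nth_rewrite 1 [← Complex.norm_mul_exp_arg_mul_I b]
    rw [mul_assoc, ← Complex.exp_add]
    congr 2
    push_cast
    ring
  have sum_polar : a + b * Complex.exp ((a.arg - b.arg : ℝ) * Complex.I) =
      (‖a‖ + ‖b‖ : ℝ) * Complex.exp (a.arg * Complex.I) := by
    rw [b_rotated, Complex.ofReal_add, add_mul, Complex.norm_mul_exp_arg_mul_I]
  rw [sum_polar, norm_mul, Complex.norm_exp_ofReal_mul_I, mul_one, Complex.norm_real,
    Real.norm_of_nonneg (by positivity)]

lemma exists_norm_eq_one_pow_eq {c : ℂ} (hc : ‖c‖ = 1) {m : ℕ} (hm : m ≠ 0) :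
    ∃ w : ℂ, ‖w‖ = 1 ∧ w ^ m = c := by
  obtain ⟨w, rfl⟩ := IsAlgClosed.exists_pow_nat_eq c (Nat.pos_of_ne_zero hm)
  exact ⟨w, (pow_eq_one_iff_of_nonneg (norm_nonneg w) hm).1 (by rwa [← norm_pow]), rfl⟩

lemma norm_coeff_zero_add_norm_coeff_le {m : ℕ} (hm : m ≠ 0) {f : ℂ[X]} (hf : f.natDegree ≤ m)
    {M : ℝ} (hM : ∀ t : ℂ, ‖t‖ = 1 → ‖f.eval t‖ ≤ M) : ‖f.coeff 0‖ + ‖f.coeff m‖ ≤ M := by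
  obtain ⟨c, hc, hc_add⟩ := exists_norm_eq_one_norm_add_mul_eq (f.coeff 0) (f.coeff m)
  obtain ⟨w, hw, rfl⟩ := exists_norm_eq_one_pow_eq hc hm
  have hζ := Complex.isPrimitiveRoot_exp m hm
  set ζ := Complex.exp (2 * Real.pi * Complex.I / m)
  have hζ_norm : ‖ζ‖ = 1 := hζ.norm'_eq_one hm
  refine le_of_mul_le_mul_left ?_ (Nat.cast_pos.2 (Nat.pos_of_ne_zero hm) : (0 : ℝ) < m)
  calc (m : ℝ) * (‖f.coeff 0‖ + ‖f.coeff m‖)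
      = ‖∑ k ∈ range m, f.eval (ζ ^ k * w)‖ := by
        rw [sum_eval_primitiveRoot_pow_mul hζ hm hf, norm_mul, hc_add, Complex.norm_natCast]
    _ ≤ ∑ _k ∈ range m, M :=
        norm_sum_le_of_le _ fun k _ =>
          hM _ (by rw [norm_mul, norm_pow, hζ_norm, hw, one_pow, one_mul])
    _ = m * M := by rw [sum_const, card_range, nsmul_eq_mul]

end Visser

/-- The value at `x` of the form `∑_{|α| = m} a_α x^α`. Allowing any commutative semiring lets the
same expression be evaluated at points of `R[X]^n`, that is, along lines. -/
def homogEval {R : Type*} [CommSemiring R] {n : ℕ} (m : ℕ) (a : (Fin n → ℕ) → R)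
    (x : Fin n → R) : R :=
  ∑ α ∈ Finset.Nat.antidiagonalTuple n m, a α * ∏ i, x i ^ α i

section HomogEval

variable {R S : Type*} [CommSemiring R] [CommSemiring S] {n m : ℕ}

lemma map_homogEval (φ : R →+* S) (a : (Fin n → ℕ) → R) (x : Fin n → R) :
    φ (homogEval m a x) = homogEval m (fun α => φ (a α)) (fun i => φ (x i)) := by
  simp only [homogEval, map_sum, map_mul, map_prod, map_pow]

lemma homogEval_smul (a : (Fin n → ℕ) → R) (c : R) (x : Fin n → R) :
    homogEval m a (c • x) = c ^ m * homogEval m a x := by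
  rw [homogEval, homogEval, mul_sum]
  refine sum_congr rfl fun α hα => ?_
  simp only [Pi.smul_apply, smul_eq_mul, mul_pow, prod_mul_distrib, prod_pow_eq_pow_sum,
    Finset.Nat.mem_antidiagonalTuple.1 hα]
  ring

lemma norm_homogEval_le_sum_norm {𝕜 : Type*} [NormedField 𝕜] (a : (Fin n → ℕ) → 𝕜)
    {x : Fin n → 𝕜} (hx : ∀ i, ‖x i‖ ≤ 1) :
    ‖homogEval m a x‖ ≤ ∑ α ∈ Finset.Nat.antidiagonalTuple n m, ‖a α‖ := by
  refine norm_sum_le_of_le _ fun α _ => ?_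
  rw [norm_mul, norm_prod]
  refine mul_le_of_le_one_right (norm_nonneg _) ?_
  refine prod_le_one (fun i _ => norm_nonneg _) fun i _ => ?_
  rw [norm_pow]
  exact pow_le_one₀ (norm_nonneg _) (hx i)

end HomogEval

section HomogAlongLine

open Polynomial

variable {R : Type*} [CommSemiring R] {n : ℕ} (m : ℕ) (a : (Fin n → ℕ) → R) (z w : Fin n → R)

/-- The one-variable polynomial `t ↦ P(t z + w)`, where `P` is the form of degree `m` with
coefficients `a`. -/
noncomputable def homogAlongLine : R[X] :=
  homogEval m (fun α => C (a α)) (fun i => C (z i) * X + C (w i))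

lemma eval_homogAlongLine (t : R) :
    (homogAlongLine m a z w).eval t = homogEval m a (t • z + w) := by
  rw [homogAlongLine, ← coe_evalRingHom, map_homogEval]
  simp [Pi.add_def, mul_comm t]

lemma natDegree_homogAlongLine_le : (homogAlongLine m a z w).natDegree ≤ m := by
  rw [homogAlongLine, homogEval]
  refine natDegree_sum_le_of_forall_le _ _ fun α hα => ?_
  refine (natDegree_C_mul_le _ _).trans ?_
  rw [← Finset.Nat.mem_antidiagonalTuple.1 hα]
  exact natDegree_prod_le_sum fun i _ => natDegree_linear_pow_le (z i) (w i) (α i)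

lemma coeff_zero_homogAlongLine : (homogAlongLine m a z w).coeff 0 = homogEval m a w := by
  rw [coeff_zero_eq_eval_zero, eval_homogAlongLine, zero_smul, zero_add]

lemma coeff_homogAlongLine : (homogAlongLine m a z w).coeff m = homogEval m a z := by
  rw [homogAlongLine, homogEval, finsetSum_coeff]
  refine sum_congr rfl fun α hα => ?_
  rw [coeff_C_mul, ← Finset.Nat.mem_antidiagonalTuple.1 hα,
    coeff_prod_sum_of_natDegree_le fun i _ => natDegree_linear_pow_le _ _ _]
  simp_rw [coeff_linear_pow]

end HomogAlongLine

section Complexification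

open ComplexConjugate

variable {n m : ℕ}

lemma sq_mul_add_conj_eq {ω : ℂ} (hω : ‖ω‖ = 1) (z : ℂ) :
    ω ^ 2 * z + conj z = 2 * ω * (ω * z).re := by
  have hω_conj : ω * conj ω = 1 := by
    rw [Complex.mul_conj, Complex.normSq_eq_norm_sq, hω, one_pow, Complex.ofReal_one]
  rw [Complex.re_eq_add_conj, map_mul]
  linear_combination (-conj z) * hω_conj

lemma norm_homogEval_sq_smul_add_conj (a : (Fin n → ℕ) → ℝ) (z : Fin n → ℂ) {ω : ℂ}
    (hω : ‖ω‖ = 1) :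
    ‖homogEval m (fun α => (a α : ℂ)) (ω ^ 2 • z + fun i => conj (z i))‖ =
      2 ^ m * ‖homogEval m a fun i => (ω * z i).re‖ := by
  have point_eq : (ω ^ 2 • z + fun i => conj (z i)) =
      (2 * ω) • fun i => (((ω * z i).re : ℝ) : ℂ) :=
    funext fun i => sq_mul_add_conj_eq hω (z i)
  have value_real : homogEval m (fun α => (a α : ℂ)) (fun i => (((ω * z i).re : ℝ) : ℂ)) =
      (homogEval m a fun i => (ω * z i).re : ℝ) :=
    (map_homogEval Complex.ofRealHom a _).symm
  rw [point_eq, homogEval_smul, value_real, norm_mul, norm_pow, norm_mul, hω, Complex.norm_ofNat,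
    mul_one, Complex.norm_real]

lemma norm_homogEval_ofReal_le (hm : m ≠ 0) (a : (Fin n → ℕ) → ℝ) (z : Fin n → ℂ) {M : ℝ}
    (hM : ∀ ω : ℂ, ‖ω‖ = 1 → ‖homogEval m a fun i => (ω * z i).re‖ ≤ M) :
    ‖homogEval m (fun α => (a α : ℂ)) z‖ ≤ 2 ^ (m - 1) * M := by
  let f := homogAlongLine m (fun α => (a α : ℂ)) z fun i => conj (z i)
  have coeff_top : f.coeff m = homogEval m (fun α => (a α : ℂ)) z := coeff_homogAlongLine ..
  have coeff_bot : f.coeff 0 = conj (homogEval m (fun α => (a α : ℂ)) z) := by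
    simp only [f, coeff_zero_homogAlongLine, map_homogEval, Complex.conj_ofReal]
  have circle_bound : ∀ t : ℂ, ‖t‖ = 1 → ‖f.eval t‖ ≤ 2 ^ m * M := by
    intro t ht
    obtain ⟨ω, hω, rfl⟩ := exists_norm_eq_one_pow_eq ht two_ne_zero
    rw [eval_homogAlongLine, norm_homogEval_sq_smul_add_conj a z hω]
    gcongr
    exact hM ω hω
  have visser := norm_coeff_zero_add_norm_coeff_le hm (natDegree_homogAlongLine_le ..) circle_bound
  rw [coeff_top, coeff_bot, Complex.norm_conj, ← mul_pow_sub_one hm] at visser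
  linarith

end Complexification

section Norms

variable {𝕜 𝕜' : Type*} [RCLike 𝕜] [RCLike 𝕜'] {p : ℝ} {m n : ℕ}

lemma norm_apply_le_lpNorm (hp : 0 < p) (x : Fin n → 𝕜) (i : Fin n) : ‖x i‖ ≤ lpNorm p x := by
  rw [lpNorm, one_div, Real.le_rpow_inv_iff_of_pos (by positivity) (by positivity) hp]
  exact single_le_sum (f := fun j => ‖x j‖ ^ p) (fun j _ => by positivity) (mem_univ i)

lemma lpNorm_le_lpNorm (hp : 0 ≤ p) {x : Fin n → 𝕜} {y : Fin n → 𝕜'} (hxy : ∀ i, ‖x i‖ ≤ ‖y i‖) :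
    lpNorm p x ≤ lpNorm p y := by
  unfold lpNorm
  gcongr with i
  exact hxy i

lemma polyNorm_nonneg (a : (Fin n → ℕ) → 𝕜) : 0 ≤ polyNorm p m n a := by
  refine Real.sSup_nonneg ?_
  rintro _ ⟨x, -, rfl⟩
  exact norm_nonneg _

lemma polyNorm_le {a : (Fin n → ℕ) → 𝕜} {M : ℝ} (hM : 0 ≤ M)
    (h : ∀ x, lpNorm p x ≤ 1 → ‖homogEval m a x‖ ≤ M) : polyNorm p m n a ≤ M := by
  refine Real.sSup_le ?_ hM
  rintro _ ⟨x, hx, rfl⟩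
  exact h x hx

lemma norm_homogEval_le_polyNorm (hp : 0 < p) (a : (Fin n → ℕ) → 𝕜) {x : Fin n → 𝕜}
    (hx : lpNorm p x ≤ 1) : ‖homogEval m a x‖ ≤ polyNorm p m n a := by
  refine le_csSup ⟨∑ α ∈ Finset.Nat.antidiagonalTuple n m, ‖a α‖, ?_⟩ ⟨x, hx, rfl⟩
  rintro _ ⟨y, hy, rfl⟩
  exact norm_homogEval_le_sum_norm a fun i => (norm_apply_le_lpNorm hp y i).trans hy

lemma polyNorm_ofReal_le (hm : m ≠ 0) (hp : 0 < p) (a : (Fin n → ℕ) → ℝ) :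
    polyNorm p m n (fun α => (a α : ℂ)) ≤ 2 ^ (m - 1) * polyNorm p m n a := by
  refine polyNorm_le (mul_nonneg (by positivity) (polyNorm_nonneg a)) fun z hz => ?_
  refine norm_homogEval_ofReal_le hm a z fun ω hω => norm_homogEval_le_polyNorm hp a ?_
  refine (lpNorm_le_lpNorm hp.le fun i => ?_).trans hz
  calc ‖(ω * z i).re‖ ≤ ‖ω * z i‖ := Complex.abs_re_le_norm _
    _ = ‖z i‖ := by rw [norm_mul, hω, one_mul]

end Norms

theorem real_HL_from_complex_HL_general {m n : ℕ} (hm : m ≠ 0) {p r s D : ℝ} (hp : 0 < p)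
    (hD : 0 ≤ D)
    (h : ∀ b : (Fin n → ℕ) → ℂ,
      (∑ α ∈ Finset.Nat.antidiagonalTuple n m, ‖b α‖ ^ r) ^ s ≤ D * polyNorm p m n b)
    (a : (Fin n → ℕ) → ℝ) :
    (∑ α ∈ Finset.Nat.antidiagonalTuple n m, ‖a α‖ ^ r) ^ s ≤
      2 ^ (m - 1) * D * polyNorm p m n a := by
  calc (∑ α ∈ Finset.Nat.antidiagonalTuple n m, ‖a α‖ ^ r) ^ s
      = (∑ α ∈ Finset.Nat.antidiagonalTuple n m, ‖(a α : ℂ)‖ ^ r) ^ s := by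
        simp only [Complex.norm_real]
    _ ≤ D * polyNorm p m n (fun α => (a α : ℂ)) := h _
    _ ≤ D * (2 ^ (m - 1) * polyNorm p m n a) := by gcongr; exact polyNorm_ofReal_le hm hp a
    _ = 2 ^ (m - 1) * D * polyNorm p m n a := by ring

/-- If `D_ℂ` is a constant for the complex polynomial Hardy–Littlewood
inequality, then `2^{m-1} · D_ℂ` is a constant for the real polynomial Hardy–Littlewood
inequality. -/
theorem real_HL_from_complex_HL (m : ℕ) (hm : 2 ≤ m)
    (p : ℝ) (hp : 2 * (m : ℝ) ≤ p) (D : ℝ) (hD : 0 < D)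
    (h : ∀ n : ℕ, 1 ≤ n → ∀ b : (Fin n → ℕ) → ℂ,
      (∑ α ∈ Finset.Nat.antidiagonalTuple n m, ‖b α‖
          ^ (2 * (m : ℝ) * p / ((m : ℝ) * p + p - 2 * m)))
        ^ (((m : ℝ) * p + p - 2 * m) / (2 * (m : ℝ) * p)) ≤ D * polyNorm p m n b) :
    ∀ n : ℕ, 1 ≤ n → ∀ a : (Fin n → ℕ) → ℝ,
      (∑ α ∈ Finset.Nat.antidiagonalTuple n m, ‖a α‖
          ^ (2 * (m : ℝ) * p / ((m : ℝ) * p + p - 2 * m)))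
        ^ (((m : ℝ) * p + p - 2 * m) / (2 * (m : ℝ) * p)) ≤
      2 ^ (m - 1) * D * polyNorm p m n a := by
  have hm' : (2 : ℝ) ≤ m := mod_cast hm
  exact fun n hn => real_HL_from_complex_HL_general (by lia) (by linarith) hD.le (h n hn)
end
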